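/- Let σ and α be sum indecomposable permutations with |α| ≥ 2, and let r ≥ 1 be an integer. Then μ(σ, ⊕ʳα) = μ(σ,α) and μ(σ, 1 ⊕ (⊕ʳα) ⊕ 1) = μ(σ,α), while μ(σ, 1 ⊕ (⊕ʳα)) = −μ(σ,α) and μ(σ, (⊕ʳα) ⊕ 1) = −μ(σ,α). -/

import Mathlib

/-!
The permutation pattern poset and its Möbius function.

A permutation of length `n` is represented as an element of the symmetric
group on `Fin n`; the collection of all permutations of all lengths is the
sigma type `PPerm`.  Pattern containment `PPerm.Le` makes `PPerm` into the
permutation pattern poset, and `mu` is its Möbius function, defined by the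
usual recursion `μ(σ,σ) = 1`, `μ(σ,π) = -∑_{σ ≤ λ < π} μ(σ,λ)` for `σ < π`
and `μ(σ,π) = 0` otherwise.
-/

open scoped Classical

/-- A permutation of an arbitrary finite length `n`, as an element of the
symmetric group on `Fin n`. -/
abbrev PPerm : Type := Σ n : ℕ, Equiv.Perm (Fin n)

namespace PPerm

/-- Classical pattern containment `σ ≤ π`: there is a strictly increasing map
of positions along which `π` realises the same relative order as `σ`. -/
def Le (σ π : PPerm) : Prop :=
  ∃ f : Fin σ.1 → Fin π.1, StrictMono f ∧
    ∀ a b : Fin σ.1, σ.2 a < σ.2 b ↔ π.2 (f a) < π.2 (f b)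

/-- Strict pattern containment. -/
def Lt (σ π : PPerm) : Prop := Le σ π ∧ σ ≠ π

/-- The permutation `1` of length one. -/
def one : PPerm := ⟨1, 1⟩

/-- The direct sum `α ⊕ β` of two permutations: `β` is placed after and
above `α`. -/
def dsum (α β : PPerm) : PPerm :=
  ⟨α.1 + β.1, finSumFinEquiv.symm.trans ((Equiv.sumCongr α.2 β.2).trans finSumFinEquiv)⟩

end PPerm

/-- Fuelled recursion computing the Möbius function of the permutation
pattern poset.  Any `λ` with `σ ≤ λ < π` has length `< |π|`, so for any
fuel `≥ |π| + 1` this computes the standard recursion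
`μ(σ,σ) = 1`, `μ(σ,π) = -∑_{σ ≤ λ < π} μ(σ,λ)` for `σ < π`, and
`μ(σ,π) = 0` when `σ ≰ π`. -/
noncomputable def muAux : ℕ → PPerm → PPerm → ℤ
  | 0, _, _ => 0
  | n + 1, σ, π =>
    if σ = π then 1
    else if PPerm.Le σ π then
      - ∑ m ∈ Finset.range π.1,
          ∑ p ∈ Finset.univ.filter
              (fun p : Equiv.Perm (Fin m) => PPerm.Le σ ⟨m, p⟩ ∧ PPerm.Le ⟨m, p⟩ π),
            muAux n σ ⟨m, p⟩
    else 0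

/-- The Möbius function of the permutation pattern poset. -/
noncomputable def mu (σ π : PPerm) : ℤ := muAux (π.1 + 1) σ π

/-- The closed interval `[σ, π]` of the permutation pattern poset, as a
finset (any `λ ≤ π` has length `≤ |π|`). -/
noncomputable def intervalCC (σ π : PPerm) : Finset PPerm :=
  (Finset.range (π.1 + 1)).biUnion fun m =>
    (Finset.univ.filter fun p : Equiv.Perm (Fin m) =>
        PPerm.Le σ ⟨m, p⟩ ∧ PPerm.Le ⟨m, p⟩ π).image fun p => (⟨m, p⟩ : PPerm)

/-- The half-open interval `[σ, π)` of the permutation pattern poset. -/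
noncomputable def intervalCO (σ π : PPerm) : Finset PPerm :=
  (intervalCC σ π).filter fun lam => lam ≠ π

/-- A permutation is sum indecomposable if it is nonempty and cannot be
written as the direct sum of two nonempty permutations. -/
def SumIndecomposable (p : PPerm) : Prop :=
  0 < p.1 ∧ ¬ ∃ a b : PPerm, 0 < a.1 ∧ 0 < b.1 ∧ p = PPerm.dsum a b

/-- `⊕ʳα`: the direct sum of `r` copies of `α` (the empty permutation for
`r = 0`). -/
def PPerm.nsum (α : PPerm) : ℕ → PPerm
  | 0 => ⟨0, 1⟩
  | 1 => α
  | n + 2 => PPerm.dsum (PPerm.nsum α (n + 1)) α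

namespace PPerm

/-- One-line notation as a function on `ℕ`. -/
def fn (l : PPerm) (i : ℕ) : ℕ := if h : i < l.1 then (l.2 ⟨i, h⟩ : ℕ) else i

theorem fn_of_lt (l : PPerm) {i : ℕ} (h : i < l.1) : fn l i = (l.2 ⟨i, h⟩ : ℕ) := by
  simp [fn, h]

theorem fn_lt (l : PPerm) {i : ℕ} (h : i < l.1) : fn l i < l.1 := by
  rw [fn_of_lt l h]; exact (l.2 ⟨i, h⟩).2

theorem fn_inj (l : PPerm) {i j : ℕ} (h : i < l.1) (h' : j < l.1) (e : fn l i = fn l j) :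
    i = j := by
  rw [fn_of_lt l h, fn_of_lt l h'] at e
  have := l.2.injective (Fin.ext e)
  simpa using this

theorem ext_fn {l m : PPerm} (h : l.1 = m.1) (h' : ∀ i < l.1, fn l i = fn m i) : l = m := by
  obtain ⟨n, p⟩ := l
  obtain ⟨n', q⟩ := m
  dsimp at h
  subst h
  congr 1
  ext i
  have := h' i.1 i.2
  rw [fn_of_lt _ (show i.1 < (⟨n, p⟩ : PPerm).1 from i.2),
    fn_of_lt _ (show i.1 < (⟨n, q⟩ : PPerm).1 from i.2)] at this
  exact this

theorem dsum_fst (a b : PPerm) : (dsum a b).1 = a.1 + b.1 := rfl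

theorem fn_dsum_left (a b : PPerm) {i : ℕ} (h : i < a.1) : fn (dsum a b) i = fn a i := by
  rw [fn_of_lt a h, fn_of_lt (dsum a b) (by rw [dsum_fst]; omega)]
  have : (⟨i, by rw [dsum_fst]; omega⟩ : Fin (dsum a b).1) = Fin.castAdd b.1 ⟨i, h⟩ := rfl
  rw [this]
  change ((finSumFinEquiv (Equiv.sumCongr a.2 b.2
    (finSumFinEquiv.symm (Fin.castAdd b.1 ⟨i, h⟩))) : Fin _) : ℕ) = _
  rw [finSumFinEquiv_symm_apply_castAdd]
  simp

theorem fn_dsum_right (a b : PPerm) {i : ℕ} (h : i < b.1) :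
    fn (dsum a b) (a.1 + i) = a.1 + fn b i := by
  rw [fn_of_lt b h, fn_of_lt (dsum a b) (by rw [dsum_fst]; omega)]
  have : (⟨a.1 + i, by rw [dsum_fst]; omega⟩ : Fin (dsum a b).1) = Fin.natAdd a.1 ⟨i, h⟩ := rfl
  rw [this]
  change ((finSumFinEquiv (Equiv.sumCongr a.2 b.2
    (finSumFinEquiv.symm (Fin.natAdd a.1 ⟨i, h⟩))) : Fin _) : ℕ) = _
  rw [finSumFinEquiv_symm_apply_natAdd]
  simp

theorem fn_dsum_right' (a b : PPerm) {i : ℕ} (h : a.1 ≤ i) (h' : i < a.1 + b.1) :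
    fn (dsum a b) i = a.1 + fn b (i - a.1) := by
  have := fn_dsum_right a b (i := i - a.1) (by omega)
  rwa [show a.1 + (i - a.1) = i by omega] at this

theorem exists_mk (n : ℕ) (g : ℕ → ℕ) (h1 : ∀ i < n, g i < n)
    (h2 : ∀ i < n, ∀ j < n, g i = g j → i = j) :
    ∃ P : PPerm, P.1 = n ∧ ∀ i < n, fn P i = g i := by
  let G : Fin n → Fin n := fun i => ⟨g i, h1 i i.2⟩
  have hG : Function.Injective G := by
    intro a b hab
    have := congrArg Fin.val hab
    exact Fin.ext (h2 a a.2 b b.2 this)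
  refine ⟨⟨n, Equiv.ofBijective G (Finite.injective_iff_bijective.1 hG)⟩, rfl, ?_⟩
  intro i hi
  rw [fn_of_lt _ (show i < (⟨n, _⟩ : PPerm).1 from hi)]
  simp [G]

theorem exists_std (n : ℕ) (g : ℕ → ℕ) (h2 : ∀ i < n, ∀ j < n, g i = g j → i = j) :
    ∃ P : PPerm, P.1 = n ∧ ∀ i < n, ∀ j < n, g i < g j → fn P i < fn P j := by
  let c : ℕ → ℕ := fun i => ((Finset.range n).filter (fun k => g k < g i)).card
  have hc : ∀ i < n, ∀ j < n, g i < g j → c i < c j := by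
    intro i hi j hj hij
    apply Finset.card_lt_card
    rw [Finset.ssubset_iff_of_subset]
    · refine ⟨i, by simp [hi, hij], by simp⟩
    · intro k hk
      simp only [Finset.mem_filter, Finset.mem_range] at hk ⊢
      omega
  obtain ⟨P, hP, hP'⟩ := exists_mk n c
    (by
      intro i hi
      have : c i < (Finset.range n).card := by
        apply Finset.card_lt_card
        rw [Finset.ssubset_iff_of_subset (Finset.filter_subset _ _)]
        exact ⟨i, by simp [hi], by simp⟩
      simpa using this)
    (by
      intro i hi j hj hij
      apply h2 i hi j hj
      rcases lt_trichotomy (g i) (g j) with h | h | h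
      · have := hc i hi j hj h; omega
      · exact h
      · have := hc j hj i hi h; omega)
  refine ⟨P, hP, ?_⟩
  intro i hi j hj hij
  rw [hP' i hi, hP' j hj]
  exact hc i hi j hj hij

theorem le_iff (s p : PPerm) : Le s p ↔ ∃ f : ℕ → ℕ,
    (∀ i < s.1, f i < p.1) ∧ (∀ i < s.1, ∀ j < s.1, i < j → f i < f j) ∧
    (∀ i < s.1, ∀ j < s.1, fn s i < fn s j → fn p (f i) < fn p (f j)) := by
  constructor
  · rintro ⟨f, hf, hf'⟩
    refine ⟨fun i => if h : i < s.1 then f ⟨i, h⟩ else 0, ?_, ?_, ?_⟩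
    · intro i hi; simp [hi]
    · intro i hi j hj hij
      simp only [hi, hj, dif_pos]
      exact hf (show (⟨i, hi⟩ : Fin s.1) < ⟨j, hj⟩ from hij)
    · intro i hi j hj hij
      simp only [hi, hj, dif_pos]
      rw [fn_of_lt _ hi, fn_of_lt _ hj] at hij
      rw [fn_of_lt _ (f ⟨i, hi⟩).2, fn_of_lt _ (f ⟨j, hj⟩).2]
      exact (hf' ⟨i, hi⟩ ⟨j, hj⟩).1 hij
  · rintro ⟨f, h1, h2, h3⟩
    have key : ∀ a b : Fin s.1, s.2 a < s.2 b →
        p.2 ⟨f a, h1 a a.2⟩ < p.2 ⟨f b, h1 b b.2⟩ := by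
      intro a b hab
      have := h3 a a.2 b b.2
      rw [fn_of_lt _ a.2, fn_of_lt _ b.2, fn_of_lt _ (h1 a a.2), fn_of_lt _ (h1 b b.2)] at this
      exact this hab
    refine ⟨fun i => ⟨f i, h1 i i.2⟩, fun a b hab => h2 a a.2 b b.2 hab, fun a b => ⟨key a b, ?_⟩⟩
    intro h
    by_contra hn
    rcases lt_or_eq_of_le (not_lt.1 hn) with h' | h'
    · exact absurd (key b a h') (not_lt.2 h.le)
    · have := s.2.injective h'
      subst this
      exact lt_irrefl _ h

theorem le_refl' (s : PPerm) : Le s s := ⟨id, strictMono_id, fun _ _ => Iff.rfl⟩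

theorem le_trans' {s t u : PPerm} (h : Le s t) (h' : Le t u) : Le s u := by
  obtain ⟨f, hf, hf'⟩ := h
  obtain ⟨g, hg, hg'⟩ := h'
  exact ⟨g ∘ f, hg.comp hf, fun a b => (hf' a b).trans (hg' _ _)⟩

theorem le_len {s t : PPerm} (h : Le s t) : s.1 ≤ t.1 := by
  obtain ⟨f, hf, _⟩ := h
  simpa using Fintype.card_le_of_injective f hf.injective

theorem strictMono_fin_id {n : ℕ} (f : Fin n → Fin n) (hf : StrictMono f) : f = id := by
  exact (StrictMono.range_inj hf strictMono_id).1 (by rw [(Finite.injective_iff_surjective.1 hf.injective).range_eq]; simp)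

theorem eq_of_le_len {s t : PPerm} (h : Le s t) (h' : s.1 = t.1) : s = t := by
  obtain ⟨n, p⟩ := s
  obtain ⟨n', q⟩ := t
  dsimp at h'
  subst h'
  obtain ⟨f, hf, hf'⟩ := h
  dsimp at f hf hf'
  have := strictMono_fin_id f hf
  subst this
  have h2 : StrictMono (fun x => q (p.symm x)) := by
    intro a b hab
    have := (hf' (p.symm a) (p.symm b)).1
    simp only [Equiv.apply_symm_apply, id] at this
    exact this hab
  have h3 := strictMono_fin_id _ h2
  congr 1
  ext i
  have := congrFun h3 (p i)
  simp at this
  rw [this]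

theorem lt_len {s t : PPerm} (h : Le s t) (h' : s ≠ t) : s.1 < t.1 := by
  rcases lt_or_eq_of_le (le_len h) with h1 | h1
  · exact h1
  · exact absurd (eq_of_le_len h h1) h'

/-- The empty permutation. -/
def emp : PPerm := ⟨0, 1⟩

theorem eq_emp {l : PPerm} (h : l.1 = 0) : l = emp :=
  ext_fn h (by intro i hi; omega)

theorem emp_dsum (a : PPerm) : dsum emp a = a := by
  have e0 : emp.1 = 0 := rfl
  apply ext_fn
  · rw [dsum_fst]; omega
  · intro i hi
    rw [dsum_fst] at hi
    rw [fn_dsum_right' _ _ (by omega) hi]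
    simp [e0]

theorem dsum_emp (a : PPerm) : dsum a emp = a := by
  have e0 : emp.1 = 0 := rfl
  apply ext_fn
  · rw [dsum_fst]; omega
  · intro i hi
    rw [dsum_fst] at hi
    rw [fn_dsum_left _ _ (by omega)]

theorem dsum_assoc (a b c : PPerm) : dsum (dsum a b) c = dsum a (dsum b c) := by
  apply ext_fn
  · simp only [dsum_fst]; omega
  · intro i hi
    simp only [dsum_fst] at hi
    by_cases h1 : i < a.1
    · rw [fn_dsum_left _ _ (by rw [dsum_fst]; omega), fn_dsum_left _ _ h1, fn_dsum_left _ _ h1]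
    · rw [fn_dsum_right' a (dsum b c) (by omega) (by rw [dsum_fst]; omega)]
      by_cases h2 : i < a.1 + b.1
      · rw [fn_dsum_left _ _ (by rw [dsum_fst]; omega), fn_dsum_right' a b (by omega) h2,
          fn_dsum_left _ _ (by omega)]
      · rw [fn_dsum_right' _ c (by rw [dsum_fst]; omega) (by rw [dsum_fst]; omega),
          fn_dsum_right' b c (by omega) (by omega), dsum_fst, Nat.sub_sub]
        omega

theorem dsum_mono {a a' b b' : PPerm} (h : Le a a') (h' : Le b b') :
    Le (dsum a b) (dsum a' b') := by
  rw [le_iff] at h h' ⊢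
  obtain ⟨f, f1, f2, f3⟩ := h
  obtain ⟨g, g1, g2, g3⟩ := h'
  refine ⟨fun i => if i < a.1 then f i else a'.1 + g (i - a.1), ?_, ?_, ?_⟩
  · intro i hi
    rw [dsum_fst] at hi ⊢
    dsimp only
    split_ifs with h1
    · have := f1 i h1; omega
    · have := g1 (i - a.1) (by omega); omega
  · intro i hi j hj hij
    rw [dsum_fst] at hi hj
    dsimp only
    split_ifs with h1 h2 h2
    · exact f2 i h1 j h2 hij
    · have := f1 i h1; omega
    · omega
    · have := g2 (i - a.1) (by omega) (j - a.1) (by omega) (by omega); omega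
  · intro i hi j hj hij
    rw [dsum_fst] at hi hj
    dsimp only
    split_ifs with h1 h2 h2
    · rw [fn_dsum_left _ _ h1, fn_dsum_left _ _ h2] at hij
      rw [fn_dsum_left _ _ (f1 i h1), fn_dsum_left _ _ (f1 j h2)]
      exact f3 i h1 j h2 hij
    · rw [fn_dsum_left _ _ (f1 i h1), fn_dsum_right _ _ (g1 _ (by omega))]
      have := fn_lt a' (f1 i h1)
      omega
    · rw [fn_dsum_left _ _ h2, fn_dsum_right' _ _ (by omega) hi] at hij
      have := fn_lt a h2
      omega
    · rw [fn_dsum_right' _ _ (by omega) hi, fn_dsum_right' _ _ (by omega) hj] at hij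
      rw [fn_dsum_right _ _ (g1 _ (by omega)), fn_dsum_right _ _ (g1 _ (by omega))]
      have := g3 (i - a.1) (by omega) (j - a.1) (by omega) (by omega)
      omega

theorem emp_le (a : PPerm) : Le emp a := by
  rw [le_iff]
  exact ⟨id, by intro i hi; exact absurd hi (Nat.not_lt_zero _),
    by intro i hi; exact absurd hi (Nat.not_lt_zero _),
    by intro i hi; exact absurd hi (Nat.not_lt_zero _)⟩

theorem one_le {a : PPerm} (h : 0 < a.1) : Le one a := by
  have e : one.1 = 1 := rfl
  rw [le_iff]
  refine ⟨fun _ => 0, fun _ _ => h, ?_, ?_⟩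
  · intro i hi j hj hij; omega
  · intro i hi j hj hij
    have : i = j := by omega
    subst this; omega

theorem left_le (a b : PPerm) : Le a (dsum a b) := by
  have := dsum_mono (le_refl' a) (emp_le b)
  rwa [dsum_emp] at this

theorem right_le (a b : PPerm) : Le b (dsum a b) := by
  have := dsum_mono (emp_le a) (le_refl' b)
  rwa [emp_dsum] at this

theorem levi {l m x y : PPerm} (h : dsum l m = dsum x y) (hlen : x.1 ≤ l.1) :
    ∃ z, l = dsum x z ∧ y = dsum z m := by
  have hl : l.1 + m.1 = x.1 + y.1 := by
    have := congrArg Sigma.fst h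
    exact this
  have e1 : ∀ i < x.1, fn l i = fn x i := by
    intro i hi
    rw [← fn_dsum_left l m (by omega), h, fn_dsum_left x y hi]
  have e2 : ∀ i, x.1 + i < l.1 → fn l (x.1 + i) = x.1 + fn y i := by
    intro i hi
    rw [← fn_dsum_left l m (by omega), h, fn_dsum_right x y (by omega)]
  obtain ⟨z, hz, hz'⟩ := exists_mk (l.1 - x.1) (fn y)
    (by
      intro i hi
      have h1 := e2 i (by omega)
      have h2 := fn_lt l (i := x.1 + i) (by omega)
      omega)
    (by
      intro i hi j hj hij
      exact fn_inj y (by omega) (by omega) hij)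
  refine ⟨z, ext_fn ?_ ?_, ext_fn ?_ ?_⟩
  · rw [dsum_fst]; omega
  · intro i hi
    by_cases h1 : i < x.1
    · rw [fn_dsum_left _ _ h1, e1 i h1]
    · rw [fn_dsum_right' _ _ (by omega) (by omega), hz' _ (by omega), ← e2 _ (by omega)]
      congr 1; omega
  · rw [dsum_fst]; omega
  · intro i hi
    by_cases h1 : i < z.1
    · rw [fn_dsum_left _ _ h1, hz' i (by omega)]
    · rw [fn_dsum_right' _ _ (by omega) (by omega)]
      have h3 := fn_dsum_right x y hi
      rw [← h, fn_dsum_right' _ _ (by omega) (by omega),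
        show x.1 + i - l.1 = i - z.1 by omega] at h3
      omega

theorem threshold (P : ℕ → Prop) (N : ℕ) (hN : ¬ P N) (hP : ∀ i j, i ≤ j → P j → P i) :
    ∃ t, t ≤ N ∧ ∀ i, P i ↔ i < t := by
  have hex : ∃ n, ¬ P n := ⟨N, hN⟩
  refine ⟨Nat.find hex, Nat.find_le hN, fun i => ⟨fun hi => ?_, fun hi => ?_⟩⟩
  · by_contra hc
    exact Nat.find_spec hex (hP _ _ (not_lt.1 hc) hi)
  · by_contra hc
    exact Nat.find_min hex hi hc

theorem le_dsum_split {l a b : PPerm} (h : Le l (dsum a b)) :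
    ∃ x y, l = dsum x y ∧ Le x a ∧ Le y b := by
  rw [le_iff] at h
  obtain ⟨f, f1, f2, f3⟩ := h
  rw [dsum_fst] at f1
  obtain ⟨t, ht, ht'⟩ := threshold (fun i => i < l.1 ∧ f i < a.1) l.1 (by simp)
    (by
      rintro i j hij ⟨h1, h2⟩
      refine ⟨by omega, ?_⟩
      rcases Nat.lt_or_eq_of_le hij with h3 | h3
      · have := f2 i (by omega) j h1 h3; omega
      · rw [h3]; exact h2)
  have hlo : ∀ i < t, f i < a.1 := fun i hi => ((ht' i).2 hi).2
  have hhi : ∀ i < l.1, t ≤ i → a.1 ≤ f i := by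
    intro i hi hti
    by_contra hc
    have := (ht' i).1 ⟨hi, by omega⟩
    omega
  have iffn : ∀ i < l.1, ∀ j < l.1, fn (dsum a b) (f i) < fn (dsum a b) (f j) →
      fn l i < fn l j := by
    intro i hi j hj hij
    rcases lt_trichotomy (fn l i) (fn l j) with h | h | h
    · exact h
    · have := fn_inj l hi hj h
      subst this; omega
    · have := f3 j hj i hi h; omega
  obtain ⟨x, hx, hx'⟩ := exists_std t (fn l) (by
    intro i hi j hj hij; exact fn_inj l (by omega) (by omega) hij)
  obtain ⟨y, hy, hy'⟩ := exists_std (l.1 - t) (fun i => fn l (t + i)) (by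
    intro i hi j hj hij
    have := fn_inj l (by omega) (by omega) hij
    omega)
  have hx2 : ∀ i < t, ∀ j < t, fn x i < fn x j → fn l i < fn l j := by
    intro i hi j hj hij
    rcases lt_trichotomy (fn l i) (fn l j) with h | h | h
    · exact h
    · have := fn_inj l (by omega) (by omega) h
      subst this; omega
    · have := hx' j hj i hi h; omega
  have hy2 : ∀ i < l.1 - t, ∀ j < l.1 - t, fn y i < fn y j → fn l (t + i) < fn l (t + j) := by
    intro i hi j hj hij
    rcases lt_trichotomy (fn l (t + i)) (fn l (t + j)) with h | h | h
    · exact h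
    · have := fn_inj l (by omega) (by omega) h
      have : i = j := by omega
      subst this; omega
    · have := hy' j hj i hi h; omega
  refine ⟨x, y, ?_, ?_, ?_⟩
  · symm
    apply eq_of_le_len
    · rw [le_iff]
      refine ⟨id, ?_, ?_, ?_⟩
      · intro i hi; rw [dsum_fst] at hi; simp only [id]; omega
      · intro i hi j hj hij; exact hij
      · intro i hi j hj hij
        rw [dsum_fst] at hi hj
        simp only [id]
        by_cases h1 : i < x.1 <;> by_cases h2 : j < x.1
        · rw [fn_dsum_left _ _ h1, fn_dsum_left _ _ h2] at hij
          exact hx2 i (by omega) j (by omega) hij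
        · apply iffn i (by omega) j (by omega)
          have q1 := hlo i (by omega)
          have q2 := hhi j (by omega) (by omega)
          rw [fn_dsum_left _ _ q1, fn_dsum_right' _ _ q2 (f1 j (by omega))]
          have := fn_lt a q1
          omega
        · rw [fn_dsum_left _ _ h2, fn_dsum_right' _ _ (by omega) hi] at hij
          have := fn_lt x h2
          omega
        · rw [fn_dsum_right' _ _ (by omega) hi, fn_dsum_right' _ _ (by omega) hj] at hij
          have := hy2 (i - x.1) (by omega) (j - x.1) (by omega) (by omega)
          rwa [show t + (i - x.1) = i by omega, show t + (j - x.1) = j by omega] at this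
    · rw [dsum_fst]; omega
  · rw [le_iff]
    refine ⟨f, fun i hi => hlo i (by omega), fun i hi j hj => f2 i (by omega) j (by omega), ?_⟩
    intro i hi j hj hij
    have := f3 i (by omega) j (by omega) (hx2 i (by omega) j (by omega) hij)
    rwa [fn_dsum_left _ _ (hlo i (by omega)), fn_dsum_left _ _ (hlo j (by omega))] at this
  · rw [le_iff]
    refine ⟨fun i => f (t + i) - a.1, ?_, ?_, ?_⟩
    · intro i hi
      have := f1 (t + i) (by omega)
      have := hhi (t + i) (by omega) (by omega)
      dsimp only
      omega
    · intro i hi j hj hij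
      have := f2 (t + i) (by omega) (t + j) (by omega) (by omega)
      have := hhi (t + i) (by omega) (by omega)
      have := hhi (t + j) (by omega) (by omega)
      dsimp only
      omega
    · intro i hi j hj hij
      have := f3 (t + i) (by omega) (t + j) (by omega) (hy2 i (by omega) j (by omega) hij)
      rw [fn_dsum_right' _ _ (hhi (t + i) (by omega) (by omega)) (f1 _ (by omega)),
        fn_dsum_right' _ _ (hhi (t + j) (by omega) (by omega)) (f1 _ (by omega))] at this
      dsimp only
      omega

/-- Direct sum of a list. -/
def word : List PPerm → PPerm
  | [] => emp
  | x :: w => dsum x (word w)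

theorem word_append (v w : List PPerm) : word (v ++ w) = dsum (word v) (word w) := by
  induction v with
  | nil => simp [word, emp_dsum]
  | cons x v ih => simp [word, ih, dsum_assoc]

theorem word_split (w : List PPerm) (hw : ∀ x ∈ w, SumIndecomposable x) (l m : PPerm)
    (h : word w = dsum l m) : ∃ w1 w2, w = w1 ++ w2 ∧ word w1 = l ∧ word w2 = m := by
  induction w generalizing l with
  | nil =>
    have h0 : 0 = l.1 + m.1 := congrArg Sigma.fst h
    refine ⟨[], [], rfl, ?_, ?_⟩
    · exact (eq_emp (by omega)).symm
    · exact (eq_emp (by omega)).symm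
  | cons x w ih =>
    rw [word] at h
    by_cases h0 : l.1 = 0
    · have := eq_emp h0
      subst this
      refine ⟨[], x :: w, rfl, rfl, ?_⟩
      rw [word, h, emp_dsum]
    · by_cases h1 : x.1 ≤ l.1
      · obtain ⟨z, hz, hz'⟩ := levi h.symm h1
        obtain ⟨w1, w2, e1, e2, e3⟩ := ih (fun y hy => hw y (List.mem_cons_of_mem _ hy)) z hz'
        refine ⟨x :: w1, w2, by simp [e1], ?_, e3⟩
        rw [word, e2, hz]
      · obtain ⟨z, hz, hz'⟩ := levi h (by omega)
        exfalso
        apply (hw x List.mem_cons_self).2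
        refine ⟨l, z, by omega, ?_, hz⟩
        have : x.1 = l.1 + z.1 := congrArg Sigma.fst hz
        omega

theorem cancel_aux {x y a b : PPerm} (hx : SumIndecomposable x) (hy : SumIndecomposable y)
    (hl : y.1 ≤ x.1) (h : dsum x a = dsum y b) : x = y ∧ a = b := by
  obtain ⟨z, hz, hz'⟩ := levi h hl
  have : z.1 = 0 := by
    by_contra hc
    exact hx.2 ⟨y, z, hy.1, by omega, hz⟩
  have := eq_emp this
  subst this
  rw [dsum_emp] at hz
  rw [emp_dsum] at hz'
  exact ⟨hz, hz'.symm⟩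

theorem word_inj (v w : List PPerm) (hv : ∀ x ∈ v, SumIndecomposable x)
    (hw : ∀ x ∈ w, SumIndecomposable x) (h : word v = word w) : v = w := by
  induction v generalizing w with
  | nil =>
    cases w with
    | nil => rfl
    | cons y w =>
      have h0 : 0 = y.1 + (word w).1 := congrArg Sigma.fst h
      have := (hw y List.mem_cons_self).1
      omega
  | cons x v ih =>
    have hx := hv x List.mem_cons_self
    cases w with
    | nil =>
      have h0 : x.1 + (word v).1 = 0 := congrArg Sigma.fst h
      have := hx.1
      omega
    | cons y w =>
      have hy := hw y List.mem_cons_self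
      have : x = y ∧ word v = word w := by
        rcases le_total y.1 x.1 with hl | hl
        · exact cancel_aux hx hy hl h
        · have := cancel_aux hy hx hl h.symm
          exact ⟨this.1.symm, this.2.symm⟩
      rw [this.1, ih w (fun z hz => hv z (List.mem_cons_of_mem _ hz))
        (fun z hz => hw z (List.mem_cons_of_mem _ hz)) this.2]

theorem one_indec : SumIndecomposable one := by
  refine ⟨Nat.one_pos, ?_⟩
  rintro ⟨a, b, ha, hb, h⟩
  have h0 : 1 = a.1 + b.1 := congrArg Sigma.fst h
  omega

theorem nsum_eq (a : PPerm) (r : ℕ) : nsum a r = word (List.replicate r a) := by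
  induction r using Nat.strong_induction_on with
  | _ r ih =>
    match r with
    | 0 => rfl
    | 1 => simp [nsum, word, dsum_emp]
    | n + 2 =>
      rw [nsum, ih (n + 1) (by omega), List.replicate_succ' (n := n + 1), word_append]
      simp [word, dsum_emp]

end PPerm

namespace PPerm

theorem word_le_left (v w : List PPerm) : Le (word v) (word (v ++ w)) := by
  rw [word_append]; exact left_le _ _

theorem word_le_right (v w : List PPerm) : Le (word w) (word (v ++ w)) := by
  rw [word_append]; exact right_le _ _

theorem word_split_le (E F : List PPerm) (al a b : PPerm) (hE : ∀ x ∈ E, SumIndecomposable x)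
    (hF : ∀ x ∈ F, SumIndecomposable x) (hal : SumIndecomposable al)
    (hEa : Le (word E) a) (hFb : Le (word F) b) (r : ℕ) :
    Le (word (E ++ (List.replicate r al ++ F))) (dsum a b) ↔
      ∃ i j, i + j = r ∧ Le (word (E ++ List.replicate i al)) a ∧
        Le (word (List.replicate j al ++ F)) b := by
  constructor
  · intro h
    obtain ⟨x, y, hxy, hx, hy⟩ := le_dsum_split h
    obtain ⟨w1, w2, hw, e1, e2⟩ := word_split _ (by
      intro z hz
      simp only [List.mem_append, List.mem_replicate] at hz
      rcases hz with hz | hz | hz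
      · exact hE z hz
      · rw [hz.2]; exact hal
      · exact hF z hz) _ _ hxy
    subst e1 e2
    rcases List.append_eq_append_iff.1 hw with ⟨c, h1, h2⟩ | ⟨c, h1, h2⟩
    · rcases List.append_eq_append_iff.1 h2 with ⟨d, h3, h4⟩ | ⟨d, h3, h4⟩
      · refine ⟨r, 0, rfl, ?_, by simpa using hFb⟩
        rw [h1, h3, ← List.append_assoc] at hx
        exact le_trans' (word_le_left _ _) hx
      · obtain ⟨h5, h6, h7⟩ := List.replicate_eq_append_iff.1 h3
        refine ⟨c.length, d.length, h5, ?_, ?_⟩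
        · rw [← h6, ← h1]; exact hx
        · rw [← h7, ← h4]; exact hy
    · refine ⟨0, r, by omega, by simpa using hEa, ?_⟩
      rw [h2] at hy
      exact le_trans' (word_le_right _ _) hy
  · rintro ⟨i, j, rfl, h1, h2⟩
    have := dsum_mono h1 h2
    rw [← word_append] at this
    simpa only [List.replicate_add, List.append_assoc] using this

theorem word_replicate_len (al : PPerm) (h : 0 < al.1) (r : ℕ) :
    r ≤ (word (List.replicate r al)).1 := by
  induction r with
  | zero => simp
  | succ r ih =>
    rw [List.replicate_succ, word, dsum_fst]; omega

theorem thr_left (E : List PPerm) (al a : PPerm) (hal : SumIndecomposable al)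
    (hEa : Le (word E) a) : ∃ t, ∀ i, Le (word (E ++ List.replicate i al)) a ↔ i ≤ t := by
  obtain ⟨t, -, ht⟩ := threshold (fun i => Le (word (E ++ List.replicate i al)) a) (a.1 + 1)
    (by
      intro h
      have h1 := le_len (le_trans' (word_le_right _ _) h)
      have := word_replicate_len al hal.1 (a.1 + 1)
      omega)
    (by
      intro i j hij h
      obtain ⟨k, rfl⟩ := Nat.exists_eq_add_of_le hij
      rw [List.replicate_add, ← List.append_assoc] at h
      exact le_trans' (word_le_left _ _) h)
  have h0 : 0 < t := (ht 0).1 (by simpa using hEa)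
  exact ⟨t - 1, fun i => (ht i).trans (by omega)⟩

theorem thr_right (E : List PPerm) (al a : PPerm) (hal : SumIndecomposable al)
    (hEa : Le (word E) a) : ∃ t, ∀ i, Le (word (List.replicate i al ++ E)) a ↔ i ≤ t := by
  obtain ⟨t, -, ht⟩ := threshold (fun i => Le (word (List.replicate i al ++ E)) a) (a.1 + 1)
    (by
      intro h
      have h1 := le_len (le_trans' (word_le_left _ _) h)
      have := word_replicate_len al hal.1 (a.1 + 1)
      omega)
    (by
      intro i j hij h
      obtain ⟨k, rfl⟩ := Nat.exists_eq_add_of_le hij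
      rw [Nat.add_comm, List.replicate_add, List.append_assoc] at h
      exact le_trans' (word_le_right _ _) h)
  have h0 : 0 < t := (ht 0).1 (by simpa using hEa)
  exact ⟨t - 1, fun i => (ht i).trans (by omega)⟩

/-- Optional block `1`. -/
def opt (e : Bool) : List PPerm := if e then [one] else []

/-- The family `(1 ⊕) αʳ (⊕ 1)`. -/
def famL (e : Bool) (al : PPerm) (r : ℕ) (f : Bool) : List PPerm :=
  opt e ++ (List.replicate r al ++ opt f)

/-- The family of permutations on which the Möbius function is supported. -/
def fam (e : Bool) (al : PPerm) (r : ℕ) (f : Bool) : PPerm := word (famL e al r f)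

/-- Signs. -/
def sg (e f : Bool) : ℤ := (if e then -1 else 1) * (if f then -1 else 1)

theorem opt_le (e : Bool) {a : PPerm} (h : 0 < a.1) : Le (word (opt e)) a := by
  cases e
  · exact emp_le a
  · have := one_le h
    simpa [opt, word, dsum_emp] using this

theorem opt_indec (e : Bool) : ∀ x ∈ opt e, SumIndecomposable x := by
  cases e <;> simp [opt, one_indec]

theorem famL_indec (e : Bool) {al : PPerm} (hal : SumIndecomposable al) (r : ℕ) (f : Bool) :
    ∀ x ∈ famL e al r f, SumIndecomposable x := by
  intro z hz
  simp only [famL, List.mem_append, List.mem_replicate] at hz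
  rcases hz with hz | hz | hz
  · exact opt_indec e z hz
  · rw [hz.2]; exact hal
  · exact opt_indec f z hz

theorem le_fam (e : Bool) (al : PPerm) (r : ℕ) (f : Bool) : Le al (fam e al (r + 1) f) := by
  have h : Le (word [al]) (fam e al (r + 1) f) := by
    unfold fam famL
    refine le_trans' ?_ (word_le_right _ _)
    rw [List.replicate_succ, List.cons_append]
    exact word_le_left [al] _
  simpa [word, dsum_emp] using h

theorem len_fam (e : Bool) {al : PPerm} (hal : 0 < al.1) (r : ℕ) (f : Bool) :
    r ≤ (fam e al r f).1 := by
  have h : Le (word (List.replicate r al)) (fam e al r f) := by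
    unfold fam famL
    exact le_trans' (word_le_left _ _) (word_le_right _ _)
  exact (word_replicate_len al hal r).trans (le_len h)

theorem ne_one {al : PPerm} (h : 2 ≤ al.1) : al ≠ one := by
  rintro rfl
  have : one.1 = 1 := rfl
  omega

theorem famL_inj {e f e' f' : Bool} {al al' : PPerm} {r r' : ℕ} (h2 : al ≠ one)
    (h2' : al' ≠ one) (h : famL e al (r + 1) f = famL e' al' (r' + 1) f') :
    e = e' ∧ al = al' ∧ r = r' ∧ f = f' := by
  have he : e = e' := by
    have := congrArg List.head? h
    cases e <;> cases e' <;> simp [famL, opt, List.replicate_succ] at this ⊢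
    · exact h2 this
    · exact h2' this.symm
  have hf : f = f' := by
    have := congrArg List.getLast? h
    cases f <;> cases f' <;> simp [famL, opt, List.replicate_succ', List.getLast?_append] at this ⊢
    · exact h2 this
    · exact h2' this.symm
  subst he hf
  simp only [famL, List.append_cancel_left_eq, List.append_cancel_right_eq] at h
  have hl := congrArg List.length h
  simp at hl
  subst hl
  have := congrArg List.head? h
  simp [List.replicate_succ] at this
  exact ⟨rfl, this, rfl, rfl⟩

theorem fam_inj {e f e' f' : Bool} {al al' : PPerm} {r r' : ℕ} (hi : SumIndecomposable al)
    (hi' : SumIndecomposable al') (h2 : 2 ≤ al.1) (h2' : 2 ≤ al'.1) :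
    fam e al (r + 1) f = fam e' al' (r' + 1) f' ↔ e = e' ∧ al = al' ∧ r = r' ∧ f = f' := by
  constructor
  · intro h
    exact famL_inj (ne_one h2) (ne_one h2')
      (word_inj _ _ (famL_indec _ hi _ _) (famL_indec _ hi' _ _) h)
  · rintro ⟨rfl, rfl, rfl, rfl⟩; rfl

theorem fam_ne_ones {e f : Bool} {al : PPerm} {r : ℕ} (hi : SumIndecomposable al)
    (h2 : 2 ≤ al.1) (w : List PPerm) (hw : ∀ x ∈ w, x = one) : fam e al (r + 1) f ≠ word w := by
  intro h
  have := word_inj _ _ (famL_indec _ hi _ _) (fun x hx => by rw [hw x hx]; exact one_indec) h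
  have h3 : al ∈ famL e al (r + 1) f := by simp [famL]
  rw [this] at h3
  exact ne_one h2 (hw _ h3)

theorem fam_key (al a b : PPerm) (hal : SumIndecomposable al) (ha : 0 < a.1) (hb : 0 < b.1)
    (N : ℕ) (hN : (dsum a b).1 ≤ N) :
    ∑ r ∈ Finset.range N, ∑ e : Bool, ∑ f : Bool,
      sg e f * (if Le (fam e al (r + 1) f) (dsum a b) then 1 else 0) = 0 := by
  choose s hs using fun e => thr_left (opt e) al a hal (opt_le e ha)
  choose t ht using fun e => thr_right (opt e) al b hal (opt_le e hb)
  have key : ∀ e r f, Le (fam e al r f) (dsum a b) ↔ r ≤ s e + t f := by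
    intro e r f
    unfold fam famL
    rw [word_split_le (opt e) (opt f) al a b (opt_indec e) (opt_indec f) hal (opt_le e ha)
      (opt_le f hb)]
    constructor
    · rintro ⟨i, j, rfl, h1, h2⟩
      have := (hs e i).1 h1
      have := (ht f j).1 h2
      omega
    · intro h
      refine ⟨min r (s e), r - min r (s e), by omega, (hs e _).2 (by omega), (ht f _).2 (by omega)⟩
  have bd : ∀ e f, s e + t f ≤ N := by
    intro e f
    have h1 := le_len ((key e (s e + t f) f).2 le_rfl)
    have h2 := len_fam e hal.1 (s e + t f) f
    omega
  have cnt : ∀ e f, ∑ r ∈ Finset.range N,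
      (if Le (fam e al (r + 1) f) (dsum a b) then (1 : ℤ) else 0) = s e + t f := by
    intro e f
    rw [Finset.sum_boole]
    have : (Finset.range N).filter (fun r => Le (fam e al (r + 1) f) (dsum a b))
        = Finset.range (s e + t f) := by
      ext r
      have := bd e f
      simp only [Finset.mem_filter, Finset.mem_range, key]
      omega
    rw [this]
    simp
  rw [Finset.sum_comm]
  have : ∀ e : Bool, ∑ r ∈ Finset.range N, ∑ f : Bool,
      sg e f * (if Le (fam e al (r + 1) f) (dsum a b) then (1 : ℤ) else 0)
      = ∑ f : Bool, sg e f * (s e + t f) := by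
    intro e
    rw [Finset.sum_comm]
    refine Finset.sum_congr rfl fun f _ => ?_
    rw [← Finset.mul_sum, cnt]
  simp only [this]
  simp [sg]
  ring

/-- All permutations of length at most `N`. -/
def U (N : ℕ) : Finset PPerm := (Finset.range (N + 1)).sigma (fun _ => Finset.univ)

theorem mem_U {N : ℕ} {l : PPerm} : l ∈ U N ↔ l.1 ≤ N := by
  simp [U]

theorem muAux_fuel (s : PPerm) : ∀ (n m : ℕ) (p : PPerm), p.1 < n → p.1 < m →
    muAux n s p = muAux m s p := by
  intro n
  induction n with
  | zero => intro m p h; omega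
  | succ n ih =>
    intro m p h1 h2
    obtain ⟨m, rfl⟩ : ∃ k, m = k + 1 := ⟨m - 1, by omega⟩
    rw [muAux, muAux]
    split_ifs with h3 h4
    · rfl
    · congr 1
      refine Finset.sum_congr rfl fun k hk => Finset.sum_congr rfl fun q _ => ?_
      have := Finset.mem_range.1 hk
      exact ih m ⟨k, q⟩ (by dsimp; omega) (by dsimp; omega)
    · rfl

theorem mu_not_le {s p : PPerm} (h : ¬ Le s p) : mu s p = 0 := by
  rw [mu, muAux, if_neg (by rintro rfl; exact h (le_refl' _)), if_neg h]

theorem mu_rec {s p : PPerm} (hne : s ≠ p) (h : Le s p) (N : ℕ) (hN : p.1 ≤ N) :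
    mu s p = - ∑ l ∈ (U N).filter (fun l => Le l p ∧ l ≠ p), mu s l := by
  rw [mu, muAux, if_neg hne, if_pos h, Finset.sum_sigma']
  congr 1
  rw [← Finset.sum_filter_add_sum_filter_not ((U N).filter (fun l => Le l p ∧ l ≠ p))
    (fun l => Le s l)]
  rw [Finset.sum_eq_zero (s := Finset.filter (fun l => ¬ Le s l) _)
    (fun l hl => mu_not_le (Finset.mem_filter.1 hl).2), add_zero]
  refine Finset.sum_congr ?_ ?_
  · ext l
    simp only [Finset.mem_sigma, Finset.mem_range, Finset.mem_filter, Finset.mem_univ, true_and,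
      mem_U]
    constructor
    · rintro ⟨h1, h2, h3⟩
      refine ⟨⟨by omega, h3, ?_⟩, h2⟩
      rintro rfl
      omega
    · rintro ⟨⟨h1, h2, h3⟩, h4⟩
      exact ⟨lt_len h2 h3, h4, h2⟩
  · intro l hl
    have h2 := (Finset.mem_filter.1 hl).1
    rw [Finset.mem_filter] at h2
    have := lt_len h2.2.1 h2.2.2
    exact muAux_fuel s _ _ l this (by omega)

/-- Indecomposables of length in `[2,N]`. -/
noncomputable def Ind (N : ℕ) : Finset PPerm :=
  (U N).filter (fun l => SumIndecomposable l ∧ 2 ≤ l.1)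

theorem mem_Ind {N : ℕ} {l : PPerm} :
    l ∈ Ind N ↔ l.1 ≤ N ∧ SumIndecomposable l ∧ 2 ≤ l.1 := by
  simp [Ind, mem_U]

/-- Indicator. -/
noncomputable def ind (l w : PPerm) : ℤ := if l = w then 1 else 0

/-- Closed formula for the Möbius function. -/
noncomputable def FF (N : ℕ) (s l : PPerm) : ℤ :=
  mu s one * (ind l (word [one]) - ind l (word [one, one])) +
    ∑ al ∈ Ind N, mu s al * ∑ r ∈ Finset.range N, ∑ e : Bool, ∑ f : Bool,
      sg e f * ind l (fam e al (r + 1) f)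

theorem FF_fam (N : ℕ) (s : PPerm) {al : PPerm} (hal : al ∈ Ind N) {r : ℕ} (hr : r < N)
    (e f : Bool) : FF N s (fam e al (r + 1) f) = sg e f * mu s al := by
  obtain ⟨-, h1, h2⟩ := mem_Ind.1 hal
  unfold FF ind
  rw [if_neg (fam_ne_ones h1 h2 _ (by simp)), if_neg (fam_ne_ones h1 h2 _ (by simp)),
    sub_zero, mul_zero, zero_add]
  rw [Finset.sum_eq_single al, Finset.sum_eq_single r]
  · simp only [fam_inj h1 h1 h2 h2]
    cases e <;> cases f <;> simp [mul_comm]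
  · intro r' _ hne
    simp only [fam_inj h1 h1 h2 h2]
    simp [hne.symm]
  · intro h; exact absurd (Finset.mem_range.2 hr) h
  · intro al' hal' hne
    obtain ⟨-, h1', h2'⟩ := mem_Ind.1 hal'
    simp only [fam_inj h1 h1' h2 h2']
    simp [hne.symm]
  · intro h; exact absurd hal h

theorem FF_one (N : ℕ) (s : PPerm) : FF N s one = mu s one := by
  have e1 : word [one] = one := by simp [word, dsum_emp]
  have e2 : one ≠ word [one, one] := by
    intro h
    have : 1 = 1 + (1 + 0) := congrArg Sigma.fst h
    omega
  unfold FF ind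
  rw [if_pos e1.symm, if_neg e2, Finset.sum_eq_zero]
  · simp
  · intro al hal
    obtain ⟨-, h1, h2⟩ := mem_Ind.1 hal
    have : ∀ e r f, one ≠ fam e al (r + 1) f := by
      intro e r f h
      rw [← e1] at h
      exact fam_ne_ones h1 h2 _ (by simp) h.symm
    simp [this]

theorem FF_not_le (N : ℕ) {s l : PPerm} (h : ¬ Le s l) : FF N s l = 0 := by
  have key : ∀ al w : PPerm, Le al w → mu s al * ind l w = 0 := by
    intro al w haw
    unfold ind
    split_ifs with h1
    · subst h1
      rw [mu_not_le (fun h2 => h (le_trans' h2 haw)), zero_mul]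
    · simp
  unfold FF
  have e1 : word [one] = one := by simp [word, dsum_emp]
  rw [mul_sub, key _ _ (by rw [e1]; exact le_refl' _), key one (word [one, one]) (left_le _ _), sub_zero, zero_add]
  refine Finset.sum_eq_zero fun al _ => ?_
  simp only [Finset.mul_sum]
  refine Finset.sum_eq_zero fun r _ => Finset.sum_eq_zero fun e _ => Finset.sum_eq_zero fun f _ => ?_
  rw [mul_left_comm, key _ _ (le_fam _ _ _ _), mul_zero]

theorem sum_ind (N : ℕ) (p w : PPerm) (hp : p.1 ≤ N) :
    ∑ l ∈ (U N).filter (fun l => Le l p), ind l w = if Le w p then 1 else 0 := by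
  unfold ind
  rw [Finset.sum_ite_eq']
  have : w ∈ (U N).filter (fun l => Le l p) ↔ Le w p := by
    rw [Finset.mem_filter, mem_U]
    exact ⟨fun h => h.2, fun h => ⟨(le_len h).trans hp, h⟩⟩
  simp only [this]

theorem sum_FF (N : ℕ) (s a b : PPerm) (ha : 0 < a.1) (hb : 0 < b.1) (hN : (dsum a b).1 ≤ N) :
    ∑ l ∈ (U N).filter (fun l => Le l (dsum a b)), FF N s l = 0 := by
  unfold FF
  rw [Finset.sum_add_distrib, ← Finset.mul_sum, Finset.sum_sub_distrib, sum_ind _ _ _ hN,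
    sum_ind _ _ _ hN]
  have e1 : word [one] = one := by simp [word, dsum_emp]
  have e2 : word [one, one] = dsum one one := by simp [word, dsum_emp]
  have l2 : Le (word [one, one]) (dsum a b) := by
    rw [e2]; exact dsum_mono (one_le ha) (one_le hb)
  have l1 : Le (word [one]) (dsum a b) := by
    rw [e1]; exact le_trans' (one_le ha) (left_le _ _)
  rw [if_pos l1, if_pos l2, sub_self, mul_zero, zero_add, Finset.sum_comm]
  refine Finset.sum_eq_zero fun al hal => ?_
  obtain ⟨-, h1, h2⟩ := mem_Ind.1 hal
  rw [← Finset.mul_sum, Finset.sum_comm]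
  have : ∀ r ∈ Finset.range N, ∑ l ∈ (U N).filter (fun l => Le l (dsum a b)),
      ∑ e : Bool, ∑ f : Bool, sg e f * ind l (fam e al (r + 1) f)
      = ∑ e : Bool, ∑ f : Bool,
      sg e f * (if Le (fam e al (r + 1) f) (dsum a b) then 1 else 0) := by
    intro r _
    rw [Finset.sum_comm]
    refine Finset.sum_congr rfl fun e _ => ?_
    rw [Finset.sum_comm]
    refine Finset.sum_congr rfl fun f _ => ?_
    rw [← Finset.mul_sum, sum_ind _ _ _ hN]
  rw [Finset.sum_congr rfl this, fam_key al a b h1 ha hb N hN, mul_zero]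

theorem mu_eq_FF (N : ℕ) (s : PPerm) (hs : SumIndecomposable s) :
    ∀ (n : ℕ) (p : PPerm), p.1 = n → p.1 ≤ N → mu s p = FF N s p := by
  intro n
  induction n using Nat.strong_induction_on with
  | _ n ih =>
    intro p hn hN
    by_cases hle : Le s p
    swap
    · rw [mu_not_le hle, FF_not_le N hle]
    have hp : 0 < p.1 := lt_of_lt_of_le hs.1 (le_len hle)
    by_cases hi : SumIndecomposable p
    · by_cases h2 : 2 ≤ p.1
      · have := FF_fam N s (mem_Ind.2 ⟨hN, hi, h2⟩) (r := 0) (by omega) false false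
        simpa [fam, famL, opt, word, dsum_emp, sg] using this.symm
      · have h1 : p.1 = one.1 := by
          change p.1 = 1
          omega
        have : p = one := ((eq_of_le_len (one_le hp) h1.symm)).symm
        subst this
        rw [FF_one]
    · have : ∃ a b : PPerm, 0 < a.1 ∧ 0 < b.1 ∧ p = dsum a b := by
        by_contra hc
        exact hi ⟨hp, hc⟩
      obtain ⟨a, b, ha, hb, rfl⟩ := this
      rw [mu_rec (by rintro rfl; exact hi hs) hle N hN]
      have h0 := sum_FF N s a b ha hb hN
      have hmem : dsum a b ∈ (U N).filter (fun l => Le l (dsum a b)) := by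
        rw [Finset.mem_filter, mem_U]; exact ⟨hN, le_refl' _⟩
      rw [← Finset.add_sum_erase _ _ hmem] at h0
      have h1 : ((U N).filter (fun l => Le l (dsum a b))).erase (dsum a b) =
          (U N).filter (fun l => Le l (dsum a b) ∧ l ≠ dsum a b) := by
        ext l
        simp only [Finset.mem_erase, Finset.mem_filter]
        tauto
      rw [h1] at h0
      rw [Finset.sum_congr rfl (g := FF N s)]
      · linarith
      · intro l hl
        obtain ⟨q1, q2, q3⟩ := Finset.mem_filter.1 hl
        exact ih l.1 (by rw [← hn]; exact lt_len q2 q3) l rfl (mem_U.1 q1)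

theorem mu_fam {s al : PPerm} (hs : SumIndecomposable s) (hal : SumIndecomposable al)
    (h2 : 2 ≤ al.1) (r : ℕ) (hr : 1 ≤ r) (e f : Bool) :
    mu s (fam e al r f) = sg e f * mu s al := by
  obtain ⟨r, rfl⟩ : ∃ k, r = k + 1 := ⟨r - 1, by omega⟩
  have h := le_len (le_fam e al r f)
  have h' := len_fam e hal.1 (r + 1) f
  rw [mu_eq_FF _ s hs _ _ rfl le_rfl]
  exact FF_fam _ s (mem_Ind.2 ⟨h, hal, h2⟩) (by omega) e f

end PPerm

/-- **(Lemma `lemma_pi_has_single_block`.)**  Let `σ` and `α` be sum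
indecomposable permutations with `|α| ≥ 2` and let `r ≥ 1`.  Then
`μ(σ, ⊕ʳα) = μ(σ,α)` and `μ(σ, 1 ⊕ (⊕ʳα) ⊕ 1) = μ(σ,α)`, while
`μ(σ, 1 ⊕ (⊕ʳα)) = −μ(σ,α)` and `μ(σ, (⊕ʳα) ⊕ 1) = −μ(σ,α)`. -/
theorem mu_of_family (σ α : PPerm) (hσ : SumIndecomposable σ)
    (hα : SumIndecomposable α) (hα2 : 2 ≤ α.1) (r : ℕ) (hr : 1 ≤ r) :
    mu σ (PPerm.nsum α r) = mu σ α ∧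
    mu σ (PPerm.dsum PPerm.one (PPerm.dsum (PPerm.nsum α r) PPerm.one)) = mu σ α ∧
    mu σ (PPerm.dsum PPerm.one (PPerm.nsum α r)) = - mu σ α ∧
    mu σ (PPerm.dsum (PPerm.nsum α r) PPerm.one) = - mu σ α := by
  have h := PPerm.mu_fam hσ hα hα2 r hr
  have h1 := h false false
  have h2 := h true true
  have h3 := h true false
  have h4 := h false true
  rw [PPerm.nsum_eq]
  simp only [PPerm.fam, PPerm.famL, PPerm.opt, PPerm.sg, PPerm.word_append, PPerm.word,
    PPerm.dsum_emp, PPerm.emp_dsum, if_true, Bool.false_eq_true, if_false] at h1 h2 h3 h4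
  refine ⟨by simpa using h1, by simpa using h2, by simpa using h3, by simpa using h4⟩
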